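/- F is the unique nonempty compact subset of K = ℝ × ℚ₂ satisfying A = (−2/3)·A ∪ (−2/3)·(A + φ(1/2)) ∪ (−2/3)·(A + φ(1)); that is, any nonempty compact A ⊆ K satisfying this set equation equals F. -/

import Mathlib

/-- The diagonal embedding `φ : ℚ → K = ℝ × ℚ₂`, `φ(z) = (z, z)`. -/
noncomputable def phi (z : ℚ) : ℝ × ℚ_[2] := ((z : ℝ), (z : ℚ_[2]))

/-- The tile `F ⊂ K = ℝ × ℚ₂`: all points of the form
`(1/2)·∑_{i=1}^{∞} d_{-i}·φ(1)·(-3/2)^{-i}` with digits `d_{-i} ∈ {0,1,2}`, the series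
converging in `K` since multiplication by `(-3/2)⁻¹` contracts both coordinates. -/
noncomputable def Ftile : Set (ℝ × ℚ_[2]) :=
  {x : ℝ × ℚ_[2] | ∃ d : ℕ → ℕ, (∀ i, d i ≤ 2) ∧
    HasSum (fun i : ℕ => phi ((1 / 2 : ℚ) * (d i : ℚ) * (-3 / 2 : ℚ) ^ (-(i : ℤ) - 1))) x}

/-!
Iterating `A = c • (A + D)` writes each point of `A` as `∑ i < n, cⁱ⁺¹ • dᵢ + cⁿ • a` with
`dᵢ ∈ D` and `a ∈ A`. Since `‖c‖ < 1` the remainder vanishes in the limit when `A` is bounded, so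
`A` consists of sums of digit expansions; conversely, every truncated expansion with a fixed
`a ∈ A` in its remainder lies in `A`, so the limit does too when `A` is closed. For `F`, take
`c = φ(-2/3)` and `D = {0, φ(1/2), φ(1)}`.
-/

open scoped Pointwise
open Filter Topology

section Expansion

variable {R E : Type*} [Semiring R] [AddCommMonoid E] [Module R E] {c : R} {A D : Set E}

lemma sum_range_succ_add_pow_smul (c : R) (d : ℕ → E) (n : ℕ) (a : E) :
    ∑ i ∈ Finset.range (n + 1), c ^ (i + 1) • d i + c ^ (n + 1) • a =
      ∑ i ∈ Finset.range n, c ^ (i + 1) • d i + c ^ n • c • (a + d n) := by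
  rw [Finset.sum_range_succ, smul_smul, ← pow_succ, smul_add, add_assoc, add_comm (_ • d n)]

lemma sum_range_add_pow_smul_mem (hA : c • (A + D) ⊆ A) {d : ℕ → E} (hd : ∀ i, d i ∈ D) (n : ℕ)
    {a : E} (ha : a ∈ A) : ∑ i ∈ Finset.range n, c ^ (i + 1) • d i + c ^ n • a ∈ A := by
  induction n generalizing a with
  | zero => simpa using ha
  | succ n ih =>
    rw [sum_range_succ_add_pow_smul]
    exact ih (hA (Set.smul_mem_smul_set (Set.add_mem_add ha (hd n))))

lemma exists_expansion_of_subset_smul_add (hA : A ⊆ c • (A + D)) {x : E} (hx : x ∈ A) :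
    ∃ a d : ℕ → E, (∀ n, a n ∈ A) ∧ (∀ i, d i ∈ D) ∧
      ∀ n, ∑ i ∈ Finset.range n, c ^ (i + 1) • d i + c ^ n • a n = x := by
  have hstep : ∀ y : A, ∃ z : A, ∃ e ∈ D, c • ((z : E) + e) = y := by
    rintro ⟨y, hy⟩
    obtain ⟨_, ⟨z, hz, e, he, rfl⟩, hzy⟩ := hA hy
    exact ⟨⟨z, hz⟩, e, he, hzy⟩
  choose next digit hdigit hnext using hstep
  let orbit : ℕ → A := fun n => next^[n] ⟨x, hx⟩
  have orbit_succ (n : ℕ) : orbit (n + 1) = next (orbit n) := Function.iterate_succ_apply' ..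
  refine ⟨fun n => orbit n, fun n => digit (orbit n), fun n => (orbit n).2,
    fun n => hdigit _, fun n => ?_⟩
  induction n with
  | zero => simp [orbit]
  | succ n ih =>
    rw [sum_range_succ_add_pow_smul]
    simpa only [orbit_succ, hnext] using ih

end Expansion

/-- The tile with base `c⁻¹` and digit set `D`: the set of sums of convergent expansions
`∑ cⁱ⁺¹ • dᵢ` with `dᵢ ∈ D`. Working with `c` itself avoids asking for it to be invertible. -/
def digitTile {R E : Type*} [Semiring R] [AddCommMonoid E] [Module R E] [TopologicalSpace E]
    (c : R) (D : Set E) : Set E :=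
  {x | ∃ d : ℕ → E, (∀ i, d i ∈ D) ∧ HasSum (fun i => c ^ (i + 1) • d i) x}

section DigitTile

variable {R E : Type*} [SeminormedRing R] [SeminormedAddCommGroup E] [Module R E]
  [IsBoundedSMul R E] {c : R} {A D : Set E}

lemma tendsto_pow_smul_of_isBounded (hc : ‖c‖ < 1) (hA : Bornology.IsBounded A)
    {a : ℕ → E} (ha : ∀ n, a n ∈ A) : Tendsto (fun n => c ^ n • a n) atTop (𝓝 0) := by
  obtain ⟨C, hC⟩ := hA.exists_norm_le
  have hbound : Tendsto (fun n => ‖c ^ n‖ * C) atTop (𝓝 0) := by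
    simpa using (tendsto_pow_atTop_nhds_zero_of_norm_lt_one hc).norm.mul_const C
  refine squeeze_zero_norm (fun n => ?_) hbound
  exact (norm_smul_le _ _).trans (by gcongr; exact hC _ (ha n))

lemma summable_norm_pow_succ_smul_of_isBounded (hc : ‖c‖ < 1) (hD : Bornology.IsBounded D)
    {d : ℕ → E} (hd : ∀ i, d i ∈ D) : Summable fun i => ‖c ^ (i + 1) • d i‖ := by
  obtain ⟨C, hC⟩ := hD.exists_norm_le
  have hgeom : Summable fun i => ‖c‖ ^ (i + 1) * C :=
    ((summable_nat_add_iff 1).2 (summable_geometric_of_lt_one (norm_nonneg c) hc)).mul_right C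
  refine hgeom.of_nonneg_of_le (fun i => norm_nonneg _) fun i => ?_
  calc ‖c ^ (i + 1) • d i‖ ≤ ‖c ^ (i + 1)‖ * ‖d i‖ := norm_smul_le _ _
    _ ≤ ‖c‖ ^ (i + 1) * C := by
      gcongr
      · exact norm_pow_le' c i.succ_pos
      · exact hC _ (hd i)

lemma digitTile_subset_of_smul_add_subset (hc : ‖c‖ < 1) (hne : A.Nonempty) (hclosed : IsClosed A)
    (hA : c • (A + D) ⊆ A) : digitTile c D ⊆ A := by
  rintro x ⟨d, hd, hsum⟩
  obtain ⟨a, ha⟩ := hne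
  have hlim := hsum.tendsto_sum_nat.add
    (tendsto_pow_smul_of_isBounded hc Bornology.isBounded_singleton fun _ => Set.mem_singleton a)
  rw [add_zero] at hlim
  exact hclosed.mem_of_tendsto hlim (.of_forall fun n => sum_range_add_pow_smul_mem hA hd n ha)

lemma subset_digitTile_of_subset_smul_add (hc : ‖c‖ < 1) (hD : Bornology.IsBounded D)
    (hbdd : Bornology.IsBounded A) (hA : A ⊆ c • (A + D)) : A ⊆ digitTile c D := by
  intro x hx
  obtain ⟨a, d, ha, hd, hexp⟩ := exists_expansion_of_subset_smul_add hA hx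
  refine ⟨d, hd, (hasSum_iff_tendsto_nat_of_summable_norm
    (summable_norm_pow_succ_smul_of_isBounded hc hD hd)).2 ?_⟩
  simpa [eq_sub_of_add_eq (hexp _)] using (tendsto_pow_smul_of_isBounded hc hbdd ha).const_sub x

theorem eq_digitTile_of_eq_smul_add (hc : ‖c‖ < 1) (hD : Bornology.IsBounded D)
    (hne : A.Nonempty) (hclosed : IsClosed A) (hbdd : Bornology.IsBounded A)
    (hA : A = c • (A + D)) : A = digitTile c D :=
  (subset_digitTile_of_subset_smul_add hc hD hbdd hA.subset).antisymm
    (digitTile_subset_of_smul_add_subset hc hne hclosed hA.symm.subset)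

end DigitTile

lemma phi_eq_algebraMap (z : ℚ) : phi z = algebraMap ℚ (ℝ × ℚ_[2]) z := rfl

lemma norm_phi_neg_two_thirds_lt_one : ‖phi (-2 / 3)‖ < 1 := by
  have hreal : ‖((-2 / 3 : ℚ) : ℝ)‖ < 1 := by norm_num [abs_lt]
  have hpadic : ‖((-2 / 3 : ℚ) : ℚ_[2])‖ < 1 := by
    have h_two : ‖(2 : ℚ_[2])‖ = 2⁻¹ := by simpa using Padic.norm_p (p := 2)
    have h_three : ‖(3 : ℚ_[2])‖ = 1 := by
      simpa using (Padic.norm_natCast_eq_one_iff (p := 2) (n := 3)).2 (by norm_num)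
    push_cast
    rw [norm_div, norm_neg, h_two, h_three]
    norm_num
  exact max_lt hreal hpadic

lemma phi_expansion_term (k i : ℕ) :
    phi ((1 / 2 : ℚ) * (k : ℚ) * (-3 / 2 : ℚ) ^ (-(i : ℤ) - 1)) =
      phi (-2 / 3) ^ (i + 1) • phi (k / 2) := by
  have hpow : (-3 / 2 : ℚ) ^ (-(i : ℤ) - 1) = (-2 / 3) ^ (i + 1) := by
    rw [← neg_add', ← Nat.cast_succ, zpow_neg, zpow_natCast, ← inv_pow]
    norm_num
  simp only [phi_eq_algebraMap, smul_eq_mul, ← map_pow, ← map_mul]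
  rw [hpow]
  congr 1
  ring

lemma image_phi_half_Iic_two :
    (fun k : ℕ => phi (k / 2)) '' Set.Iic 2 = {0, phi (1 / 2), phi 1} := by
  have hIic : Set.Iic 2 = ({0, 1, 2} : Set ℕ) := by
    ext k
    simp only [Set.mem_Iic, Set.mem_insert_iff, Set.mem_singleton_iff]
    omega
  have phi_zero : phi 0 = 0 := map_zero (algebraMap ℚ (ℝ × ℚ_[2]))
  simp [hIic, Set.image_insert_eq, phi_zero]

lemma Ftile_eq_digitTile : Ftile = digitTile (phi (-2 / 3)) {0, phi (1 / 2), phi 1} := by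
  rw [← image_phi_half_Iic_two]
  ext x
  constructor
  · rintro ⟨k, hk, hsum⟩
    simp only [phi_expansion_term] at hsum
    exact ⟨fun i => phi (k i / 2), fun i => Set.mem_image_of_mem _ (hk i), hsum⟩
  · rintro ⟨d, hd, hsum⟩
    choose k hk hkd using hd
    simp only [← hkd, ← phi_expansion_term] at hsum
    exact ⟨k, hk, hsum⟩

lemma phi_neg_two_thirds_smul (A : Set (ℝ × ℚ_[2])) :
    phi (-2 / 3) • A = (fun p => ((-2 / 3 : ℝ) * p.1, (-2 / 3 : ℚ_[2]) * p.2)) '' A := by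
  refine Set.image_congr fun p _ => ?_
  ext <;> simp [phi]

/-- `F` is the unique nonempty compact subset of `K = ℝ × ℚ₂` satisfying
`A = (-2/3)·A ∪ (-2/3)·(A + φ(1/2)) ∪ (-2/3)·(A + φ(1))`: any nonempty compact `A ⊆ K`
satisfying this set equation equals `F`. -/
theorem Ftile_unique_attractor (A : Set (ℝ × ℚ_[2])) (hne : A.Nonempty) (hc : IsCompact A)
    (heq : A =
        (fun p : ℝ × ℚ_[2] => ((-2 / 3 : ℝ) * p.1, (-2 / 3 : ℚ_[2]) * p.2)) '' A ∪
        (fun p : ℝ × ℚ_[2] => ((-2 / 3 : ℝ) * p.1, (-2 / 3 : ℚ_[2]) * p.2)) ''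
          ((fun x => x + phi (1 / 2)) '' A) ∪
        (fun p : ℝ × ℚ_[2] => ((-2 / 3 : ℝ) * p.1, (-2 / 3 : ℚ_[2]) * p.2)) ''
          ((fun x => x + phi 1) '' A)) :
    A = Ftile := by
  have hA : A = phi (-2 / 3) • (A + {0, phi (1 / 2), phi 1}) := by
    rw [Set.insert_eq, Set.insert_eq, Set.add_union, Set.add_union, Set.smul_set_union,
      Set.smul_set_union, ← Set.union_assoc]
    simpa only [phi_neg_two_thirds_smul, Set.add_singleton, add_zero, Set.image_id'] using heq
  rw [Ftile_eq_digitTile]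
  exact eq_digitTile_of_eq_smul_add norm_phi_neg_two_thirds_lt_one
    (Set.toFinite _).isBounded hne hc.isClosed hc.isBounded hA
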